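/- Let R ⊆ X × Y, S ⊆ Y × Z, T ⊆ Z × X be finite binary relations each of cardinality at most N. Then the number of triples (x,y,z) with (x,y) ∈ R, (y,z) ∈ S, (z,x) ∈ T is at most N^(3/2). -/

import Mathlib

/-!
Count pairs of joined triples that agree in their `(x, y)`-coordinates. By Cauchy-Schwarz over the
fibres of the projection to `R`, there are at least `|J|² / |R|` such pairs, where `J` is the join.
A pair `((x, y, z), (x, y, z'))` is recovered from `(y, z) ∈ S` and `(z', x) ∈ T`, so there are at
most `|S| |T|` of them. Hence `|J|² ≤ |R| |S| |T|`.
-/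

open Finset

theorem sqrt_mul_mul_le_rpow_three_div_two {a b c N : ℝ} (hb : 0 ≤ b) (hc : 0 ≤ c)
    (haN : a ≤ N) (hbN : b ≤ N) (hcN : c ≤ N) : √(a * b * c) ≤ N ^ ((3 : ℝ) / 2) := by
  have hN : 0 ≤ N := hb.trans hbN
  calc
    √(a * b * c) ≤ √(N * N * N) := by gcongr
    _ = √(N ^ 3) := by rw [pow_three']
    _ = N ^ ((3 : ℝ) / 2) := by
      rw [Real.sqrt_eq_rpow, ← Real.rpow_natCast_mul hN]
      norm_num

section FiberPairs

variable {α β : Type*} [DecidableEq β] {s : Finset α} {t : Finset β} {f : α → β}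

theorem card_filter_apply_eq_eq_sum_sq_card_fiber (hf : (s : Set α).MapsTo f t) :
    #{p ∈ s ×ˢ s | f p.1 = f p.2} = ∑ b ∈ t, #{a ∈ s | f a = b} ^ 2 := by
  have hmaps : (({p ∈ s ×ˢ s | f p.1 = f p.2} : Finset (α × α)) : Set (α × α)).MapsTo
      (fun p ↦ f p.1) t :=
    fun p hp ↦ hf (mem_product.1 (mem_filter.1 hp).1).1
  rw [card_eq_sum_card_fiberwise hmaps]
  refine sum_congr rfl fun b _ ↦ ?_
  rw [sq, ← card_product, ← filter_product, filter_filter]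
  congr 1
  grind

theorem sq_card_le_card_mul_card_filter_apply_eq (hf : (s : Set α).MapsTo f t) :
    #s ^ 2 ≤ #t * #{p ∈ s ×ˢ s | f p.1 = f p.2} :=
  calc
    #s ^ 2 = (∑ b ∈ t, #{a ∈ s | f a = b}) ^ 2 := by rw [card_eq_sum_card_fiberwise hf]
    _ ≤ #t * ∑ b ∈ t, #{a ∈ s | f a = b} ^ 2 := sq_sum_le_card_mul_sum_sq
    _ = #t * #{p ∈ s ×ˢ s | f p.1 = f p.2} := by
      rw [card_filter_apply_eq_eq_sum_sq_card_fiber hf]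

end FiberPairs

section Triples

variable {X Y Z : Type*}

theorem card_filter_fst_snd_eq_le_card_mul_card [DecidableEq X] [DecidableEq Y]
    {J : Finset (X × Y × Z)} {S : Finset (Y × Z)} {T : Finset (Z × X)}
    (hS : (J : Set (X × Y × Z)).MapsTo (fun p ↦ (p.2.1, p.2.2)) S)
    (hT : (J : Set (X × Y × Z)).MapsTo (fun p ↦ (p.2.2, p.1)) T) :
    #{q ∈ J ×ˢ J | (q.1.1, q.1.2.1) = (q.2.1, q.2.2.1)} ≤ #S * #T := by
  rw [← card_product]
  refine card_le_card_of_injOn (fun q ↦ ((q.1.2.1, q.1.2.2), (q.2.2.2, q.2.1))) ?_ ?_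
  · intro q hq
    obtain ⟨hq₁, hq₂⟩ := mem_product.1 (mem_filter.1 hq).1
    exact mem_product.2 ⟨hS hq₁, hT hq₂⟩
  · rintro ⟨⟨x₁, y₁, z₁⟩, x₂, y₂, z₂⟩ hq ⟨⟨x₁', y₁', z₁'⟩, x₂', y₂', z₂'⟩ hq' h
    have hxy := (mem_filter.1 hq).2
    have hxy' := (mem_filter.1 hq').2
    simp only [Prod.mk.injEq] at hxy hxy' h ⊢
    grind

/-- The discrete Loomis-Whitney inequality in dimension three. -/
theorem sq_card_le_card_mul_card_mul_card_of_mapsTo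
    {J : Finset (X × Y × Z)} {R : Finset (X × Y)} {S : Finset (Y × Z)} {T : Finset (Z × X)}
    (hR : (J : Set (X × Y × Z)).MapsTo (fun p ↦ (p.1, p.2.1)) R)
    (hS : (J : Set (X × Y × Z)).MapsTo (fun p ↦ (p.2.1, p.2.2)) S)
    (hT : (J : Set (X × Y × Z)).MapsTo (fun p ↦ (p.2.2, p.1)) T) :
    #J ^ 2 ≤ #R * #S * #T := by
  classical
  calc
    #J ^ 2 ≤ #R * #{q ∈ J ×ˢ J | (q.1.1, q.1.2.1) = (q.2.1, q.2.2.1)} :=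
      sq_card_le_card_mul_card_filter_apply_eq hR
    _ ≤ #R * (#S * #T) := by grw [card_filter_fst_snd_eq_le_card_mul_card hS hT]
    _ = #R * #S * #T := (mul_assoc ..).symm

/-- The natural join `R(x, y) ⋈ S(y, z) ⋈ T(z, x)`, whose size the theorem bounds. It is a `Set`, so
that no decidable equality on `X`, `Y`, `Z` is required. -/
def triangleJoin (R : Finset (X × Y)) (S : Finset (Y × Z)) (T : Finset (Z × X)) :
    Set (X × Y × Z) :=
  {p | (p.1, p.2.1) ∈ R ∧ (p.2.1, p.2.2) ∈ S ∧ (p.2.2, p.1) ∈ T}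

theorem finite_triangleJoin (R : Finset (X × Y)) (S : Finset (Y × Z)) (T : Finset (Z × X)) :
    (triangleJoin R S T).Finite := by
  refine Set.Finite.of_injOn (f := fun p ↦ ((p.1, p.2.1), p.2)) (t := ↑(R ×ˢ S)) ?_ ?_
    (finite_toSet _)
  · exact fun p hp ↦ mem_product.2 ⟨hp.1, hp.2.1⟩
  · exact fun p _ q _ h ↦ Prod.ext (congrArg (·.1.1) h) (congrArg (·.2) h)

theorem stmt5_general (R : Finset (X × Y)) (S : Finset (Y × Z)) (T : Finset (Z × X)) :
    ((triangleJoin R S T).ncard : ℝ) ≤ √(#R * #S * #T) := by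
  obtain ⟨J, hJ⟩ := (finite_triangleJoin R S T).exists_finset_coe
  have hsq : #J ^ 2 ≤ #R * #S * #T := by
    apply sq_card_le_card_mul_card_mul_card_of_mapsTo <;> rw [hJ]
    exacts [fun _ hp ↦ hp.1, fun _ hp ↦ hp.2.1, fun _ hp ↦ hp.2.2]
  rw [← hJ, Set.ncard_coe_finset]
  exact Real.le_sqrt_of_sq_le (mod_cast hsq)

end Triples

/-- AGM bound for the triangle join: if `|R|,|S|,|T| ≤ N`, the number of triples
`(x,y,z)` with `(x,y)∈R`, `(y,z)∈S`, `(z,x)∈T` is at most `N^(3/2)`. -/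
theorem stmt5 {X Y Z : Type*} (R : Finset (X × Y)) (S : Finset (Y × Z)) (T : Finset (Z × X))
    (N : ℝ) (hR : (R.card : ℝ) ≤ N) (hS : (S.card : ℝ) ≤ N) (hT : (T.card : ℝ) ≤ N) :
    (({p : X × Y × Z | (p.1, p.2.1) ∈ R ∧ (p.2.1, p.2.2) ∈ S ∧ (p.2.2, p.1) ∈ T}.ncard : ℝ))
      ≤ N ^ ((3 : ℝ) / 2) := by
  exact (stmt5_general R S T).trans <|
    sqrt_mul_mul_le_rpow_three_div_two (Nat.cast_nonneg _) (Nat.cast_nonneg _) hR hS hT
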